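/- Let (R, 𝔪) be a one-dimensional local Cohen–Macaulay ring with infinite residue field and let I be an 𝔪-primary R-ideal. Assume that the colon ideal J : I does not depend on the minimal reduction J of I. Then for every minimal reduction J of I one has core(I) = (J : I)·J. -/

import Mathlib

open IsLocalRing

universe u v

namespace CPU

section Defs

variable {R : Type u} [CommRing R]

/-- The minimal number of generators of a submodule, as an extended natural number. -/
noncomputable def muE {M : Type v} [AddCommGroup M] [Module R M] (N : Submodule R M) : ℕ∞ :=
  sInf {n : ℕ∞ | ∃ s : Finset M, (s.card : ℕ∞) = n ∧ Submodule.span R (s : Set M) = N}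

/-- The Krull dimension of a ring, valued in `WithBot ℕ∞`. -/
noncomputable def rDim (S : Type v) [CommRing S] : WithBot ℕ∞ :=
  ringKrullDim S

/-- `J` is a reduction of `I`. -/
def IsReduction (J I : Ideal R) : Prop :=
  J ≤ I ∧ ∃ r : ℕ, I ^ (r + 1) = J * I ^ r

/-- `J` is a minimal reduction of `I`. -/
def IsMinimalReduction (J I : Ideal R) : Prop :=
  IsReduction J I ∧ ∀ J' : Ideal R, IsReduction J' I → J' ≤ J → J' = J

/-- The core of an ideal: the intersection of all of its minimal reductions. -/
noncomputable def core (I : Ideal R) : Ideal R :=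
  sInf {J : Ideal R | IsMinimalReduction J I}

/-- The reduction number of `I`. -/
noncomputable def reductionNumber (I : Ideal R) : ℕ∞ :=
  sInf {n : ℕ∞ | ∃ r : ℕ, (r : ℕ∞) = n ∧ ∃ J : Ideal R,
    IsMinimalReduction J I ∧ I ^ (r + 1) = J * I ^ r}

/-- `γ(I)`: the least number of minimal reductions whose intersection is the core. -/
noncomputable def gamma (I : Ideal R) : ℕ∞ :=
  sInf {n : ℕ∞ | ∃ t : ℕ, (t : ℕ∞) = n ∧ ∃ Js : Fin t → Ideal R,
    (∀ i, IsMinimalReduction (Js i) I) ∧ core I = ⨅ i, Js i}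

/-- The height of an ideal. -/
noncomputable def ht (I : Ideal R) : WithBot ℕ∞ :=
  ⨅ (p : PrimeSpectrum R) (_ : I ≤ p.asIdeal),
    rDim (Localization.AtPrime p.asIdeal)

/-- The Krull dimension of the special fiber ring of `I`,
i.e. the analytic spread of `I`. -/
noncomputable def fiberDim [IsLocalRing R] (I : Ideal R) : WithBot ℕ∞ :=
  rDim (↥(reesAlgebra I) ⧸
    (Ideal.map (algebraMap R ↥(reesAlgebra I)) (maximalIdeal R)))

/-- The condition `G_s`. -/
def Gcond (I : Ideal R) (s : ℕ) : Prop :=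
  ∀ p : PrimeSpectrum R, I ≤ p.asIdeal →
    rDim (Localization.AtPrime p.asIdeal) < (s : WithBot ℕ∞) →
    (muE (Ideal.map (algebraMap R (Localization.AtPrime p.asIdeal)) I) : WithBot ℕ∞) ≤
      rDim (Localization.AtPrime p.asIdeal)

/-- Depth of a module over a local ring, via lengths of regular sequences in the
maximal ideal. -/
noncomputable def mDepth (R : Type u) [CommRing R] [IsLocalRing R]
    (M : Type v) [AddCommGroup M] [Module R M] : ℕ∞ :=
  sSup {n : ℕ∞ | ∃ rs : List R, (∀ x ∈ rs, x ∈ maximalIdeal R) ∧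
    RingTheory.Sequence.IsRegular M rs ∧ (rs.length : ℕ∞) = n}

/-- Depth of the quotient `R/K` of a local ring `R`. -/
noncomputable def qDepth (R : Type u) [CommRing R] [IsLocalRing R] (K : Ideal R) : ℕ∞ :=
  mDepth R (R ⧸ K)

/-- The socle of `R/K`, for `R` local. -/
noncomputable def socle (R : Type u) [CommRing R] [IsLocalRing R] (K : Ideal R) :
    Ideal (R ⧸ K) :=
  Submodule.colon (⊥ : Ideal (R ⧸ K)) (Ideal.map (Ideal.Quotient.mk K) (maximalIdeal R))

/-- The Cohen–Macaulay type of the quotient `R/K` of a local ring `R`. -/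
noncomputable def qType (R : Type u) [CommRing R] [IsLocalRing R] (K : Ideal R) : ℕ∞ :=
  sInf {n : ℕ∞ | ∃ rs : List R, (∀ x ∈ rs, x ∈ maximalIdeal R) ∧
    RingTheory.Sequence.IsRegular (R ⧸ K) rs ∧ (rs.length : ℕ∞) = qDepth R K ∧
    muE (socle R (K ⊔ Ideal.ofList rs)) = n}

/-- Cohen–Macaulayness for a quotient `R/K` of a local ring `R`. -/
def IsCMQuot (R : Type u) [CommRing R] [IsLocalRing R] (K : Ideal R) : Prop :=
  rDim (R ⧸ K) = (qDepth R K : WithBot ℕ∞)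

/-- A Cohen–Macaulay local ring: depth equals Krull dimension. -/
def IsCMLocalRing (R : Type u) [CommRing R] [IsLocalRing R] : Prop :=
  rDim R = (qDepth R (⊥ : Ideal R) : WithBot ℕ∞)

/-- A Gorenstein local ring: Cohen–Macaulay of type one. -/
def IsGorensteinLocalRing (R : Type u) [CommRing R] [IsLocalRing R] : Prop :=
  IsCMLocalRing R ∧ qType R (⊥ : Ideal R) = 1

/-- Gorensteinness of the quotient ring `R/K` of a local ring. -/
def IsGorQuot (R : Type u) [CommRing R] [IsLocalRing R] (K : Ideal R) : Prop :=
  IsCMQuot R K ∧ qType R K = 1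

/-- A regular local ring: the maximal ideal is generated by `dim R` elements. -/
def IsRegularLocal (R : Type u) [CommRing R] [IsLocalRing R] : Prop :=
  IsNoetherianRing R ∧ (muE (maximalIdeal R) : WithBot ℕ∞) = rDim R

/-- Serre's condition `S₂` for the quotient ring `R/K`. -/
def QuotS2 (K : Ideal R) : Prop :=
  ∀ (q : Ideal R) (hq : q.IsPrime), K ≤ q →
    letI := hq
    min 2 (rDim ((Localization.AtPrime q) ⧸
        (Ideal.map (algebraMap R (Localization.AtPrime q)) K)))
      ≤ (qDepth (Localization.AtPrime q)
          (Ideal.map (algebraMap R (Localization.AtPrime q)) K) : WithBot ℕ∞)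

/-- `K` is an `s`-residual intersection of `I`. -/
def IsResidualIntersection (I K : Ideal R) (s : ℕ) : Prop :=
  K ≠ ⊤ ∧ ht I ≤ (s : WithBot ℕ∞) ∧ (s : WithBot ℕ∞) ≤ ht K ∧
    ∃ a : Ideal R, a ≤ I ∧ (∃ f : Finset R, f.card ≤ s ∧ Ideal.span (f : Set R) = a) ∧
      K = Submodule.colon a I

/-- `K` is a geometric `s`-residual intersection of `I`. -/
def IsGeometricRI (I K : Ideal R) (s : ℕ) : Prop :=
  IsResidualIntersection I K s ∧ (s : WithBot ℕ∞) + 1 ≤ ht (I ⊔ K)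

/-- `I` is weakly `s`-residually `S₂`. -/
def WeaklyResS2 (I : Ideal R) (s : ℕ) : Prop :=
  ∀ i ≤ s, ∀ K : Ideal R, IsGeometricRI I K i → QuotS2 K

/-- The condition `AN_s` for `I`. -/
def ANcond [IsLocalRing R] (I : Ideal R) (s : ℕ) : Prop :=
  ∀ i ≤ s, ∀ K : Ideal R, IsResidualIntersection I K i → IsCMQuot R K

/-- The condition `AN_s⁻` for `I`. -/
def ANminus [IsLocalRing R] (I : Ideal R) (s : ℕ) : Prop :=
  ∀ i ≤ s, ∀ K : Ideal R, IsGeometricRI I K i → IsCMQuot R K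

/-- `I` is universally weakly `s`-residually `S₂`: for every finite set of
variables, the extension of `I` to `R(x₁, …, x_n)` is weakly `s`-residually `S₂`. -/
def UnivWeaklyResS2 [IsLocalRing R] (I : Ideal R) (s : ℕ) : Prop :=
  ∀ (n : ℕ)
    (hP : (Ideal.map (MvPolynomial.C (σ := Fin n)) (maximalIdeal R)).IsPrime),
    letI := hP
    WeaklyResS2 (Ideal.map
      ((algebraMap (MvPolynomial (Fin n) R)
        (Localization.AtPrime
          (Ideal.map (MvPolynomial.C (σ := Fin n)) (maximalIdeal R)))).comp
        (MvPolynomial.C)) I) s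

/-- The `j`-th Fitting ideal of (the module) `I`. -/
noncomputable def fittingIdeal (I : Ideal R) (j : ℕ) : Ideal R :=
  ⨆ (n : ℕ) (π : (Fin n → R) →ₗ[R] R) (_ : LinearMap.range π = I),
    Ideal.span {d : R | ∃ (v : Fin (n - j) → (Fin n → R)) (r : Fin (n - j) → Fin n),
      (∀ k, π (v k) = 0) ∧ d = Matrix.det (Matrix.of fun i k => v k (r i))}

/-- The set `Q(I)` of primes containing `Fitt_ℓ(I)` at which `R` has dimension `ℓ`
and `I` has analytic spread `ℓ`. -/
def QSet [IsLocalRing R] (I : Ideal R) (l : ℕ) : Set (PrimeSpectrum R) :=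
  {p | fittingIdeal I l ≤ p.asIdeal ∧
    rDim (Localization.AtPrime p.asIdeal) = (l : WithBot ℕ∞) ∧
    fiberDim (Ideal.map (algebraMap R (Localization.AtPrime p.asIdeal)) I)
      = (l : WithBot ℕ∞)}

/-- An ideal is integrally closed if it admits no larger ideal of which it is a
reduction. -/
def IsIntClosedIdeal (I : Ideal R) : Prop :=
  ∀ J : Ideal R, IsReduction I J → J = I

/-- A normal ideal: all powers are integrally closed. -/
def IsNormalIdeal (I : Ideal R) : Prop :=
  ∀ j : ℕ, IsIntClosedIdeal (I ^ j)

/-- `φ` is a presentation matrix of the ideal `I` (with `n = μ(I)` rows). -/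
def Presents {n m : ℕ} (φ : Matrix (Fin n) (Fin m) R) (I : Ideal R) : Prop :=
  muE I = (n : ℕ∞) ∧ ∃ π : (Fin n → R) →ₗ[R] R, LinearMap.range π = I ∧
    LinearMap.range (Matrix.toLin' φ) = LinearMap.ker π

/-- The ideal of `t × t` minors of a matrix. -/
noncomputable def minorsIdeal {n m : ℕ} (t : ℕ) (φ : Matrix (Fin n) (Fin m) R) : Ideal R :=
  Ideal.span {d : R | ∃ (r : Fin t → Fin n) (c : Fin t → Fin m),
    d = (φ.submatrix r c).det}

/-- The grade of an ideal: the supremum of lengths of regular sequences contained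
in it. -/
noncomputable def grade (I : Ideal R) : ℕ∞ :=
  sSup {n : ℕ∞ | ∃ rs : List R, (∀ x ∈ rs, x ∈ I) ∧
    RingTheory.Sequence.IsRegular R rs ∧ (rs.length : ℕ∞) = n}

end Defs

/-- `M` has projective dimension at most `n` over `R`. -/
def ProjDimLE (R : Type u) [CommRing R] :
    (n : ℕ) → (M : Type u) → [AddCommGroup M] → [Module R M] → Prop
  | 0, M, _, _ => Module.Projective R M
  | n + 1, M, _, _ => ∃ (k : ℕ) (f : (Fin k → R) →ₗ[R] M), Function.Surjective f ∧
      ProjDimLE R n ↥(LinearMap.ker f)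

section Defs2

variable {R : Type u} [CommRing R]

/-- `M` has projective dimension exactly `n` over `R`. -/
def ProjDimEq (R : Type u) [CommRing R] (M : Type u) [AddCommGroup M] [Module R M]
    (n : ℕ) : Prop :=
  ProjDimLE R n M ∧ ∀ m : ℕ, ProjDimLE R m M → n ≤ m

/-- A perfect ideal: the projective dimension of `R/I` equals the grade of `I`. -/
def IsPerfectIdeal (I : Ideal R) : Prop :=
  ∃ g : ℕ, grade I = (g : ℕ∞) ∧ ProjDimEq R (R ⧸ I) g

/-- The multiplicative set which is the complement of the union of the associated
primes of `R/H`. -/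
def assComplement (H : Ideal R) : Submonoid R where
  carrier := {r : R | ∀ p ∈ associatedPrimes R (R ⧸ H), r ∉ p}
  one_mem' := fun p hp => (Ideal.ne_top_iff_one p).mp hp.1.ne_top
  mul_mem' := fun {a b} ha hb p hp hab =>
    (hp.1.mem_or_mem hab).elim (ha p hp) (hb p hp)

/-- The `j`-th symbolic power of `H`. -/
noncomputable def symbolicPower (H : Ideal R) (j : ℕ) : Ideal R :=
  Ideal.comap (algebraMap R (Localization (assComplement H)))
    (Ideal.map (algebraMap R (Localization (assComplement H))) (H ^ j))

/-- Serre's condition `S₂` for a module. -/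
def ModuleS2 (S : Type u) [CommRing S] (M : Type v) [AddCommGroup M] [Module S M] : Prop :=
  ∀ (q : Ideal S) (hq : q.IsPrime),
    letI := hq
    min 2 (rDim ((Localization.AtPrime q) ⧸
        (Module.annihilator (Localization.AtPrime q) (LocalizedModule q.primeCompl M))))
      ≤ (mDepth (Localization.AtPrime q) (LocalizedModule q.primeCompl M) : WithBot ℕ∞)

/-- `M` is a maximal Cohen–Macaulay `S`-module. -/
def IsMCM (S : Type u) [CommRing S] (M : Type v) [AddCommGroup M] [Module S M] : Prop :=
  ∀ (q : Ideal S) (hq : q.IsMaximal),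
    letI := hq.isPrime
    (mDepth (Localization.AtPrime q) (LocalizedModule q.primeCompl M) : WithBot ℕ∞) =
      rDim (Localization.AtPrime q)

end Defs2

/-!
The lengths of the `R ⧸ I ^ n` bound `μ(I ^ n)` independently of `n`, so `μ(I ^ (n + 1)) ≤ n + 1`
for large `n`. Then the `n + 2` monomials of degree `n + 1` in `y, z ∈ I` satisfy a relation with a
unit coefficient modulo `𝔪 I ^ (n + 1)`; hence in a reduction `y` and `z` may be replaced by
`y - u z` for all but finitely many residues of `u`. In particular every reduction contains a
principal one, and the minimal reductions are exactly the principal reductions.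

If `(x)` is a minimal reduction, `x b ∈ core I` and `z ∈ I`, then `t = z / x` is integral over `R`,
and `x b` lies in `(z - v x)` for all generic `v`, so `b / (t - v) ∈ R`. Choose as many such `v` as
the degree of an equation of integral dependence of `t`, with distinct residues, and let `P` be the
product of the `X - v`. Then `t P(t)` is the value at `t` of a polynomial of degree less than
`deg P`, and Lagrange interpolation, whose denominators are now units, writes `t` as an
`R`-combination of the `1 / (t - v)`. So `b t ∈ R`, that is, `b z ∈ (x)`, which gives
`core I ≤ (J : I) J`; the reverse inclusion is immediate from the independence of `J : I` of `J`.
-/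

open nonZeroDivisors

section Reductions

variable {R : Type u} [CommRing R] {I J L : Ideal R} {r n : ℕ} {y z : R}

theorem pow_add_eq_pow_mul_pow (hr : I ^ (r + 1) = J * I ^ r) (n : ℕ) :
    I ^ (n + r) = J ^ n * I ^ r := by
  induction n with
  | zero => simp
  | succ n ih =>
    calc I ^ (n + 1 + r) = I * I ^ (n + r) := by ring
      _ = J ^ n * I ^ (r + 1) := by rw [ih]; ring
      _ = J ^ (n + 1) * I ^ r := by rw [hr]; ring

theorem isReduction_of_pow_succ_le (hJI : J ≤ I) (h : I ^ (r + 1) ≤ J * I ^ r) :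
    IsReduction J I :=
  ⟨hJI, r, h.antisymm (pow_succ' I r ▸ Ideal.mul_mono_left hJI)⟩

theorem IsReduction.mono (hL : IsReduction L I) (hLJ : L ≤ J) (hJI : J ≤ I) :
    IsReduction J I := by
  obtain ⟨-, r, hr⟩ := hL
  exact isReduction_of_pow_succ_le hJI (hr.trans_le (Ideal.mul_mono_left hLJ))

theorem IsMinimalReduction.core_le (hJ : IsMinimalReduction J I) : core I ≤ J :=
  sInf_le (show J ∈ {J | IsMinimalReduction J I} from hJ)

theorem IsReduction.exists_pow_mem (hJ : IsReduction J I) {a : R} (ha : a ∈ I) :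
    ∃ k : ℕ, a ^ k ∈ J := by
  obtain ⟨-, r, hr⟩ := hJ
  exact ⟨r + 1, Ideal.mul_le_left (hr ▸ Ideal.pow_mem_pow ha (r + 1))⟩

theorem IsReduction.mem_nonZeroDivisors (hy : IsReduction (Ideal.span {y}) I) {a : R}
    (haI : a ∈ I) (ha : a ∈ R⁰) : y ∈ R⁰ := by
  obtain ⟨k, hk⟩ := hy.exists_pow_mem haI
  obtain ⟨b, hb⟩ := Ideal.mem_span_singleton'.mp hk
  exact (mul_mem_nonZeroDivisors.mp (hb ▸ pow_mem ha k : b * y ∈ R⁰)).2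

theorem sup_pow_succ_le (K L : Ideal R) (n : ℕ) :
    (K ⊔ L) ^ (n + 1) ≤ K ^ (n + 1) ⊔ L * (K ⊔ L) ^ n := by
  induction n with
  | zero => simp
  | succ n ih =>
    have hK : K * (K ⊔ L) ^ (n + 1) ≤ K ^ (n + 2) ⊔ L * (K ⊔ L) ^ (n + 1) := calc
      K * (K ⊔ L) ^ (n + 1) ≤ K * (K ^ (n + 1) ⊔ L * (K ⊔ L) ^ n) := Ideal.mul_mono_right ih
      _ = K ^ (n + 2) ⊔ L * (K * (K ⊔ L) ^ n) := by
        rw [Ideal.mul_sup, ← pow_succ', mul_left_comm]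
      _ ≤ K ^ (n + 2) ⊔ L * (K ⊔ L) ^ (n + 1) := by
        rw [pow_succ' (K ⊔ L) n]
        gcongr
        exact le_sup_left
    rw [pow_succ' (K ⊔ L) (n + 1), Ideal.sup_mul]
    exact sup_le hK le_sup_right

theorem eq_span_singleton_mul_colon (hJ : J ≤ Ideal.span {y}) :
    J = Ideal.span {y} * Submodule.colon J {y} := by
  ext a
  simp only [Ideal.mem_span_singleton_mul, Submodule.mem_colon_singleton, smul_eq_mul]
  constructor
  · intro ha
    obtain ⟨c, rfl⟩ := Ideal.mem_span_singleton.mp (hJ ha)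
    exact ⟨c, mul_comm y c ▸ ha, rfl⟩
  · rintro ⟨c, hc, rfl⟩
    exact mul_comm c y ▸ hc

theorem pow_succ_sub_pow_succ_mem (hy : y ∈ I) (hz : z ∈ I) (n : ℕ) :
    y ^ (n + 1) - z ^ (n + 1) ∈ Ideal.span {y - z} * I ^ n := by
  rw [← (Commute.all y z).mul_geom_sum₂]
  refine Ideal.mul_mem_mul (Ideal.mem_span_singleton_self _) (Ideal.sum_mem _ fun i hi => ?_)
  have hin : i ≤ n := by simpa [Nat.lt_succ_iff] using hi
  rw [Nat.add_sub_cancel, ← Nat.add_sub_cancel' hin, pow_add, Nat.add_sub_cancel_left]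
  exact Ideal.mul_mem_mul (Ideal.pow_mem_pow hy i) (Ideal.pow_mem_pow hz (n - i))

theorem pow_mul_pow_sub_mem (hy : y ∈ I) (hz : z ∈ I) (u : R) {i k : ℕ} (hik : i + k = n + 1) :
    y ^ i * z ^ k - u ^ i * z ^ (n + 1) ∈ Ideal.span {y - u * z} * I ^ n := by
  rcases i with _ | i
  · simp [← hik]
  obtain rfl : n = i + k := by lia
  have h := Ideal.mul_mem_mul
    (pow_succ_sub_pow_succ_mem hy (Ideal.mul_mem_left I u hz) i) (Ideal.pow_mem_pow hz k)
  rw [mul_assoc, ← pow_add] at h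
  convert h using 1
  ring

variable [IsNoetherianRing R]

theorem spanFinrank_span_singleton_mul_le (x : R) (I : Ideal R) :
    (Ideal.span {x} * I).spanFinrank ≤ I.spanFinrank := by
  have hmap : Ideal.span {x} * I = Submodule.map (LinearMap.mulLeft R x) I := by
    ext a
    simp only [Ideal.mem_span_singleton_mul, Submodule.mem_map, LinearMap.mulLeft_apply]
  exact hmap ▸ Submodule.spanFinrank_map_le_of_fg _ (IsNoetherian.noetherian I)

theorem IsReduction.exists_spanFinrank_pow_succ_le
    (hx : IsReduction (Ideal.span {y}) I) : ∃ n, (I ^ (n + 1)).spanFinrank ≤ n + 1 := by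
  obtain ⟨-, r, hr⟩ := hx
  refine ⟨(I ^ r).spanFinrank + r, ?_⟩
  rw [add_right_comm, pow_add_eq_pow_mul_pow hr, Ideal.span_singleton_pow]
  have hle := spanFinrank_span_singleton_mul_le (y ^ ((I ^ r).spanFinrank + 1)) (I ^ r)
  lia

variable [IsLocalRing R]

theorem IsReduction.of_sup_maximalIdeal_mul (hJI : J ≤ I)
    (h : IsReduction (J ⊔ maximalIdeal R * I) I) : IsReduction J I := by
  obtain ⟨-, r, hr⟩ := h
  refine isReduction_of_pow_succ_le hJI (r := r)
    (Submodule.le_of_le_smul_of_le_jacobson_bot (IsNoetherian.noetherian (I ^ (r + 1)))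
      (maximalIdeal_le_jacobson ⊥) ?_)
  rw [smul_eq_mul, pow_succ' I r, ← mul_assoc, ← Ideal.sup_mul, ← hr, pow_succ' I r]

theorem IsReduction.isMinimalReduction_span_singleton (hy : IsReduction (Ideal.span {y}) I)
    (hI : ¬ IsNilpotent I) : IsMinimalReduction (Ideal.span {y}) I := by
  refine ⟨hy, fun J hJ hJy => ?_⟩
  have hJ_eq := eq_span_singleton_mul_colon hJy
  obtain ⟨-, r, hr⟩ := hJ
  have hle : I ^ (r + 1) ≤ Submodule.colon J {y} * I ^ (r + 1) := calc
    I ^ (r + 1) = Submodule.colon J {y} * (Ideal.span {y} * I ^ r) := by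
      rw [← mul_assoc, mul_comm (Submodule.colon J {y}), ← hJ_eq, hr]
    _ ≤ Submodule.colon J {y} * I ^ (r + 1) := by
      rw [pow_succ' I r]
      exact Ideal.mul_mono_right (Ideal.mul_mono_left hy.1)
  by_contra hne
  have hcolon : Submodule.colon J {y} ≠ ⊤ := fun h => hne (by rw [hJ_eq, h, Ideal.mul_top])
  refine hI ⟨r + 1, ?_⟩
  exact Submodule.eq_bot_of_le_smul_of_le_jacobson_bot _ _ (IsNoetherian.noetherian _) hle
    ((le_maximalIdeal hcolon).trans (maximalIdeal_le_jacobson ⊥))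

end Reductions

section GenericElements

variable {R : Type u} [CommRing R] [IsLocalRing R]

theorem exists_sum_smul_mem_maximalIdeal_smul {M ι : Type*} [AddCommGroup M] [Module R M]
    [Fintype ι] {N : Submodule R M} (hN : N.FG) (hcard : N.spanFinrank < Fintype.card ι)
    {g : ι → M} (hg : ∀ i, g i ∈ N) :
    ∃ c : ι → R, ∑ i, c i • g i ∈ maximalIdeal R • N ∧ ∃ i, IsUnit (c i) := by
  let 𝔪N : Submodule R N := maximalIdeal R • ⊤
  have : Module.Finite R N := Module.Finite.iff_fg.mpr hN
  have : Module.Finite (R ⧸ maximalIdeal R) (N ⧸ 𝔪N) := .of_restrictScalars_finite R _ _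
  rw [spanFinrank_eq_finrank_quotient N hN] at hcard
  have hdep : ¬ LinearIndependent (R ⧸ maximalIdeal R) fun i => 𝔪N.mkQ ⟨g i, hg i⟩ :=
    fun h => hcard.not_ge h.fintype_card_le_finrank
  obtain ⟨d, hd, i, hdi⟩ := Fintype.not_linearIndependent_iff.mp hdep
  choose c hc using fun i => Ideal.Quotient.mk_surjective (d i)
  refine ⟨c, ?_, i, (residue_ne_zero_iff_isUnit _).mp (show residue R (c i) ≠ 0 from ?_)⟩
  · have hsum : ∑ i, c i • (⟨g i, hg i⟩ : N) ∈ 𝔪N := by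
      rw [← Submodule.Quotient.mk_eq_zero, ← Submodule.mkQ_apply, ← hd]
      simp only [map_sum, map_smul, ← hc]
      rfl
    have := Submodule.mem_map_of_mem (f := N.subtype) hsum
    rwa [Submodule.map_smul'', Submodule.map_top, Submodule.range_subtype, map_sum] at this
  · exact (hc i).trans_ne hdi

open Polynomial in
theorem exists_finset_isUnit_eval {p : R[X]} {i : ℕ} (hp : IsUnit (p.coeff i)) :
    ∃ F : Finset (ResidueField R), ∀ u, residue R u ∉ F → IsUnit (p.eval u) := by
  classical
  have hp0 : p.map (residue R) ≠ 0 := fun h => by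
    refine (residue_ne_zero_iff_isUnit _).mpr hp ?_
    rw [← coeff_map, h, coeff_zero]
  refine ⟨(p.map (residue R)).roots.toFinset, fun u hu => ?_⟩
  contrapose! hu
  rw [← residue_ne_zero_iff_isUnit, not_not] at hu
  rw [Multiset.mem_toFinset, mem_roots hp0, IsRoot, eval_map_apply, hu]

theorem exists_pairwise_isUnit_sub [Infinite (ResidueField R)] (F : Finset (ResidueField R)) :
    ∃ v : ℕ → R, (∀ i, residue R (v i) ∉ F) ∧ Pairwise fun i j => IsUnit (v i - v j) := by
  have : Infinite {a // a ∉ F} := F.finite_toSet.infinite_compl.to_subtype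
  let e := Infinite.natEmbedding {a // a ∉ F}
  choose v hv using fun i => residue_surjective (e i).1
  refine ⟨v, fun i => hv i ▸ (e i).2, fun i j hij => ?_⟩
  beta_reduce
  rw [← residue_ne_zero_iff_isUnit, map_sub, hv, hv, sub_ne_zero]
  exact fun h => hij (e.injective (Subtype.ext h))

variable [IsNoetherianRing R] {I J : Ideal R} {y z : R} {n : ℕ}

theorem exists_finset_pow_succ_mem (hI : (I ^ (n + 1)).spanFinrank ≤ n + 1)
    (hy : y ∈ I) (hz : z ∈ I) :
    ∃ F : Finset (ResidueField R), ∀ u, residue R u ∉ F →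
      z ^ (n + 1) ∈ Ideal.span {y - u * z} * I ^ n ⊔ maximalIdeal R * I ^ (n + 1) := by
  have hmem : ∀ i : Fin (n + 2), y ^ (i : ℕ) * z ^ (n + 1 - i) ∈ I ^ (n + 1) := fun i => by
    rw [← Nat.add_sub_cancel' (Nat.lt_succ_iff.mp i.2), pow_add, Nat.add_sub_cancel_left]
    exact Ideal.mul_mem_mul (Ideal.pow_mem_pow hy _) (Ideal.pow_mem_pow hz _)
  obtain ⟨c, hc, i₀, hi₀⟩ := exists_sum_smul_mem_maximalIdeal_smul
    (IsNoetherian.noetherian (I ^ (n + 1))) (by simpa [Nat.lt_succ_iff] using hI) hmem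
  let p : Polynomial R := ∑ i : Fin (n + 2), .monomial i (c i)
  have hp : p.coeff i₀ = c i₀ := by simp [p, Polynomial.coeff_monomial, Fin.val_inj]
  obtain ⟨F, hF⟩ := exists_finset_isUnit_eval (hp ▸ hi₀)
  refine ⟨F, fun u hu => ?_⟩
  -- Modulo `y - u * z` each monomial `y ^ i * z ^ (n + 1 - i)` becomes `u ^ i * z ^ (n + 1)`.
  have hdiff : ∑ i, c i • (y ^ (i : ℕ) * z ^ (n + 1 - i)) - p.eval u * z ^ (n + 1) ∈
      Ideal.span {y - u * z} * I ^ n := by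
    rw [Polynomial.eval_finsetSum, Finset.sum_mul, ← Finset.sum_sub_distrib]
    refine Ideal.sum_mem _ fun i _ => ?_
    rw [Polynomial.eval_monomial, smul_eq_mul, mul_assoc, ← mul_sub]
    exact Ideal.mul_mem_left _ _ (pow_mul_pow_sub_mem hy hz u (by lia))
  rw [← Ideal.unit_mul_mem_iff_mem _ (hF u hu)]
  exact (Submodule.sub_mem_iff_right _ (Ideal.mem_sup_right hc)).mp (Ideal.mem_sup_left hdiff)

theorem IsReduction.of_span_singleton_sup (hJ : IsReduction (Ideal.span {z} ⊔ J) I)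
    (hz : z ^ (n + 1) ∈ J * I ^ n ⊔ maximalIdeal R * I ^ (n + 1)) : IsReduction J I := by
  obtain ⟨hle, r, hr⟩ := hJ
  have hJI : J ≤ I := le_sup_right.trans hle
  have hpow : (Ideal.span {z} ⊔ J) ^ (n + 1) ≤ (J ⊔ maximalIdeal R * I) * I ^ n := calc
    _ ≤ Ideal.span {z} ^ (n + 1) ⊔ J * (Ideal.span {z} ⊔ J) ^ n := sup_pow_succ_le _ _ _
    _ ≤ (J ⊔ maximalIdeal R * I) * I ^ n := by
      refine sup_le ?_ (Ideal.mul_mono le_sup_left (Ideal.pow_right_mono hle n))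
      rwa [Ideal.span_singleton_pow, Ideal.span_singleton_le_iff_mem, Ideal.sup_mul, mul_assoc,
        ← pow_succ']
  refine .of_sup_maximalIdeal_mul hJI
    (isReduction_of_pow_succ_le (r := n + r) (sup_le hJI Ideal.mul_le_right) ?_)
  rw [add_right_comm, pow_add_eq_pow_mul_pow hr, pow_add I, ← mul_assoc]
  exact Ideal.mul_mono_left hpow

theorem exists_finset_isReduction (hI : (I ^ (n + 1)).spanFinrank ≤ n + 1)
    (hy : y ∈ I) (hz : z ∈ I) :
    ∃ F : Finset (ResidueField R), ∀ u, residue R u ∉ F →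
      ∀ L : Ideal R, IsReduction (Ideal.span {y, z} ⊔ L) I →
        IsReduction (Ideal.span {y - u * z} ⊔ L) I := by
  obtain ⟨F, hF⟩ := exists_finset_pow_succ_mem hI hy hz
  refine ⟨F, fun u hu L hL => ?_⟩
  have hle : Ideal.span {y - u * z} ≤ Ideal.span {y - u * z} ⊔ L := le_sup_left
  refine .of_span_singleton_sup (z := z) ?_
    (SetLike.le_def.mp (sup_le_sup_right (Ideal.mul_mono_left hle) _) (hF u hu))
  rwa [sup_left_comm, ← sup_assoc, ← Ideal.span_insert, Ideal.span_pair_sub_mul_right]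

theorem IsReduction.exists_isReduction_span_singleton [Infinite (ResidueField R)]
    (hJ : IsReduction J I) (hI : (I ^ (n + 1)).spanFinrank ≤ n + 1) :
    ∃ y ∈ J, IsReduction (Ideal.span {y}) I := by
  classical
  have key : ∀ s : Finset R, (s : Set R) ⊆ J → ∀ y ∈ J,
      IsReduction (Ideal.span {y} ⊔ Ideal.span s) I → ∃ y ∈ J, IsReduction (Ideal.span {y}) I := by
    intro s
    induction s using Finset.induction_on with
    | empty => exact fun _ y hy h => ⟨y, hy, by simpa using h⟩
    | insert z s _ ih =>
      intro hs y hy h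
      obtain ⟨hz, hs⟩ := Set.insert_subset_iff.mp (Finset.coe_insert z s ▸ hs)
      obtain ⟨F, hF⟩ := exists_finset_isReduction hI (hJ.1 hy) (hJ.1 hz)
      obtain ⟨v, hv⟩ := Infinite.exists_notMem_finset F
      obtain ⟨u, rfl⟩ := residue_surjective v
      refine ih hs _ (sub_mem hy (J.mul_mem_left u hz)) (hF u hv _ ?_)
      rwa [Finset.coe_insert, Ideal.span_insert, ← sup_assoc, ← Ideal.span_insert] at h
  obtain ⟨s, rfl⟩ := (IsNoetherian.noetherian J : J.FG)
  exact key s Submodule.subset_span 0 (zero_mem _) (by simpa using hJ)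

end GenericElements

section DimensionOne

open scoped Pointwise

variable {R : Type u} [CommRing R] [IsLocalRing R]

theorem length_quotient_maximalIdeal_smul_top {M : Type*} [AddCommGroup M] [Module R M]
    {N : Submodule R M} (hN : N.FG) :
    Module.length R (N ⧸ maximalIdeal R • (⊤ : Submodule R N)) = N.spanFinrank := by
  let := Ideal.Quotient.field (maximalIdeal R)
  have : Module.Finite R N := Module.Finite.iff_fg.mpr hN
  have : Module.Finite (R ⧸ maximalIdeal R) (N ⧸ maximalIdeal R • (⊤ : Submodule R N)) :=
    .of_restrictScalars_finite R _ _
  rw [spanFinrank_eq_finrank_quotient N hN, ← Module.length_eq_finrank]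
  exact Module.length_eq_of_surjective Ideal.Quotient.mk_surjective

theorem length_quotient_maximalIdeal_smul {M : Type*} [AddCommGroup M] [Module R M]
    {N : Submodule R M} (hN : N.FG) :
    Module.length R (M ⧸ maximalIdeal R • N) = N.spanFinrank + Module.length R (M ⧸ N) := by
  have hmap : (maximalIdeal R • (⊤ : Submodule R N)).map N.subtype = maximalIdeal R • N := by
    rw [Submodule.map_smul'', Submodule.map_top, Submodule.range_subtype]
  have hle : maximalIdeal R • N ≤ N := Submodule.smul_le_right
  let f : (N ⧸ maximalIdeal R • (⊤ : Submodule R N)) →ₗ[R] M ⧸ maximalIdeal R • N :=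
    Submodule.mapQ _ _ N.subtype (Submodule.map_le_iff_le_comap.mp hmap.le)
  have hf : Function.Injective f := by
    rw [← LinearMap.ker_eq_bot]
    apply Submodule.ker_liftQ_eq_bot
    rw [LinearMap.ker_comp, Submodule.ker_mkQ, ← hmap,
      Submodule.comap_map_eq_of_injective N.injective_subtype]
  have hexact : Function.Exact f (Submodule.factor hle) := by
    rw [LinearMap.exact_iff, Submodule.range_mapQ, Submodule.range_subtype, Submodule.factor,
      Submodule.ker_mapQ, Submodule.comap_id]
  rw [Module.length_eq_add_of_exact f _ hf (Submodule.factor_surjective hle) hexact,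
    length_quotient_maximalIdeal_smul_top hN]

theorem exists_mem_maximalIdeal_mem_nonZeroDivisors (hR : qDepth R ⊥ ≠ 0) :
    ∃ w ∈ maximalIdeal R, w ∈ R⁰ := by
  contrapose! hR
  refine nonpos_iff_eq_zero.mp (sSup_le ?_)
  rintro n ⟨_ | ⟨w, rs⟩, hmem, hreg, rfl⟩
  · simp
  · have hw : IsSMulRegular R w :=
      ((Submodule.quotEquivOfEqBot (⊥ : Ideal R) rfl).isSMulRegular_congr w).mp
        ((RingTheory.Sequence.isRegular_cons_iff _ _ _).mp hreg).1
    refine absurd ?_ (hR w (hmem w List.mem_cons_self))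
    exact (isLeftRegular_iff_isRegular.mp hw.isLeftRegular).mem_nonZeroDivisors

variable [IsNoetherianRing R]

theorem spanFinrank_le_ord {w : R} (hwm : w ∈ maximalIdeal R) (hw : w ∈ R⁰) {N : Ideal R}
    (hN : Module.length R (R ⧸ N) ≠ ⊤) : N.spanFinrank ≤ Ring.ord R w := by
  have hle : w • N ≤ maximalIdeal R • N := by
    rw [← Submodule.ideal_span_singleton_smul]
    exact Submodule.smul_mono_left ((Ideal.span_singleton_le_iff_mem _).mpr hwm)
  refine (ENat.add_le_add_iff_right hN).mp ?_
  calc N.spanFinrank + Module.length R (R ⧸ N)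
      = Module.length R (R ⧸ maximalIdeal R • N) :=
        (length_quotient_maximalIdeal_smul (IsNoetherian.noetherian N)).symm
    _ ≤ Module.length R (R ⧸ w • N) :=
        Module.length_le_of_surjective _ (Submodule.factor_surjective hle)
    _ = Ring.ord R w + Module.length R (R ⧸ N) := by
        rw [Module.length_eq_add_of_exact _ _ (Ideal.mulQuot_injective N hw)
          (Ideal.quotOfMul_surjective N) (Ideal.exact_mulQuot_quotOfMul N), add_comm, Ring.ord]

variable [Infinite (ResidueField R)] {I : Ideal R}

theorem exists_isReduction_span_singleton_of_radical_eq [Ring.KrullDimLE 1 R]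
    (hI : I.radical = maximalIdeal R) {w : R} (hwm : w ∈ maximalIdeal R) (hw : w ∈ R⁰) :
    ∃ x ∈ R⁰, IsReduction (Ideal.span {x}) I := by
  obtain ⟨k, hk⟩ : ∃ k, w ^ k ∈ I := hI ▸ hwm
  obtain ⟨n, hn⟩ := ENat.ne_top_iff_exists.mp (Ring.ord_ne_top hw)
  have hpow : Ideal.span {(w ^ k) ^ (n + 1)} ≤ I ^ (n + 1) :=
    (Ideal.span_singleton_le_iff_mem _).mpr (Ideal.pow_mem_pow hk _)
  have hlen : Module.length R (R ⧸ I ^ (n + 1)) ≠ ⊤ :=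
    ne_top_of_le_ne_top (Ring.ord_ne_top (pow_mem (pow_mem hw k) (n + 1)))
      (Module.length_le_of_surjective _ (Submodule.factor_surjective hpow))
  have hrank : (I ^ (n + 1)).spanFinrank ≤ n :=
    ENat.natCast_le_natCast.mp ((spanFinrank_le_ord hwm hw hlen).trans_eq hn.symm)
  obtain ⟨x, -, hx⟩ := (isReduction_of_pow_succ_le (r := 0) le_rfl (by simp) :
    IsReduction I I).exists_isReduction_span_singleton (hrank.trans n.le_succ)
  exact ⟨x, hx.mem_nonZeroDivisors hk (pow_mem hw k), hx⟩

theorem exists_isReduction_span_singleton_of_isCMLocalRing (hCM : IsCMLocalRing R)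
    (hdim : rDim R = 1) (hI : I.radical = maximalIdeal R) :
    ∃ x ∈ R⁰, IsReduction (Ideal.span {x}) I := by
  have : Ring.KrullDimLE 1 R := Ring.krullDimLE_iff.mpr hdim.le
  have hdepth : qDepth R ⊥ ≠ 0 := fun h => by simp [IsCMLocalRing, hdim, h] at hCM
  obtain ⟨w, hwm, hw⟩ := exists_mem_maximalIdeal_mem_nonZeroDivisors hdepth
  exact exists_isReduction_span_singleton_of_radical_eq hI hwm hw

end DimensionOne

section PartialFractions

open Polynomial

variable {R : Type u} [CommRing R] {ι : Type*} {s : Finset ι} {v : ι → R}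

theorem exists_eq_sum_C_mul_prod_erase [DecidableEq ι] {f : R[X]} (hf : f.degree < s.card)
    (hv : (s : Set ι).Pairwise fun i j => IsUnit (v i - v j)) :
    ∃ r : ι → R, f = ∑ i ∈ s, C (r i) * ∏ k ∈ s.erase i, (X - C (v k)) := by
  nontriviality R
  have hmonic : ∀ i ∈ s, (X - C (v i)).Monic := fun i _ => monic_X_sub_C (v i)
  obtain ⟨q, r, hr, hqr⟩ := eq_quo_mul_prod_add_sum_rem_mul_prod f hmonic
    (hv.mono' fun i j => isCoprime_X_sub_C_of_isUnit_sub)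
  have hP : (∏ i ∈ s, (X - C (v i))).Monic := monic_prod_of_monic s _ hmonic
  have hP_deg : (∏ i ∈ s, (X - C (v i))).degree = (s.card : WithBot ℕ) := by
    rw [degree_eq_natDegree hP.ne_zero, natDegree_finsetProd_X_sub_C_eq_card]
  have hrem : (∑ i ∈ s, r i * ∏ k ∈ s.erase i, (X - C (v k))).degree < s.card := by
    rw [← mem_degreeLT]
    refine sum_mem fun i hi => mem_degreeLT.mpr ?_
    have hPi := monic_prod_of_monic (s.erase i) _ fun k hk => hmonic k (Finset.mem_of_mem_erase hk)
    rw [← hP_deg, ← Finset.mul_prod_erase s _ hi, hPi.degree_mul, hPi.degree_mul]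
    exact WithBot.add_lt_add_right (degree_ne_bot.mpr hPi.ne_zero) (hr i hi)
  have hq : q = 0 := by
    rw [← (div_modByMonic_unique q _ hP ⟨(by rw [hqr]; ring : _ + _ = f),
      hrem.trans_eq hP_deg.symm⟩).1, divByMonic_eq_zero_iff hP, hP_deg]
    exact hf
  refine ⟨fun i => (r i).coeff 0, ?_⟩
  rw [hqr, hq, zero_mul, zero_add]
  refine Finset.sum_congr rfl fun i hi => ?_
  rw [← eq_C_of_degree_le_zero (Order.lt_succ_iff.mp ((hr i hi).trans_eq (degree_X_sub_C _)))]

theorem algebraMap_mul_aeval_mem_range {A : Type*} [CommRing A] [Algebra R A] {t : A} {p : R[X]}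
    (hp : p.Monic) (hpt : aeval t p = 0) (hcard : p.natDegree = s.card)
    (hv : (s : Set ι).Pairwise fun i j => IsUnit (v i - v j))
    (ht : ∀ i ∈ s, t - algebraMap R A (v i) ∈ A⁰) {b : R}
    (hb : ∀ i ∈ s, ∃ c, algebraMap R A b = (t - algebraMap R A (v i)) * algebraMap R A c)
    (f : R[X]) : algebraMap R A b * aeval t f ∈ (algebraMap R A).range := by
  classical
  rcases subsingleton_or_nontrivial R with _ | _
  · have := Module.subsingleton R A
    exact ⟨0, Subsingleton.elim _ _⟩
  choose! c hc using hb
  -- Expanding `f * P %ₘ p` amounts to writing `f(t) = ∑ rᵢ / (t - vᵢ)`, and `b / (t - vᵢ)` is `cᵢ`.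
  set P := ∏ i ∈ s, (X - C (v i)) with hP
  have hdeg : (f * P %ₘ p).degree < s.card :=
    (degree_modByMonic_lt _ hp).trans_eq (by rw [degree_eq_natDegree hp.ne_zero, hcard])
  obtain ⟨r, hr⟩ := exists_eq_sum_C_mul_prod_erase hdeg hv
  have hPt : aeval t P ∈ A⁰ := by
    simp only [hP, map_prod, map_sub, aeval_X, aeval_C]
    exact prod_mem ht
  refine ⟨∑ i ∈ s, r i * c i, (mul_cancel_left_mem_nonZeroDivisors hPt).mp ?_⟩
  calc aeval t P * algebraMap R A (∑ i ∈ s, r i * c i)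
      = ∑ i ∈ s, aeval t (C (r i) * ∏ k ∈ s.erase i, (X - C (v k))) * algebraMap R A b := by
        rw [map_sum, Finset.mul_sum]
        refine Finset.sum_congr rfl fun i hi => ?_
        rw [hP, ← Finset.mul_prod_erase s _ hi, hc i hi]
        simp only [map_mul, map_sub, aeval_X, aeval_C]
        ring
    _ = aeval t (f * P) * algebraMap R A b := by
        rw [← Finset.sum_mul, ← map_sum, ← hr, aeval_modByMonic_eq_self_of_root hpt]
    _ = aeval t P * (algebraMap R A b * aeval t f) := by
        rw [map_mul]
        ring

theorem mul_mem_span_singleton_of_forall_mem_span_singleton {A : Type*} [CommRing A] [Algebra R A]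
    [IsFractionRing R A] {x z b : R} {t : A} (hx : x ∈ R⁰)
    (htx : t * algebraMap R A x = algebraMap R A z) (ht : IsIntegral R t) {v : ℕ → R}
    (hv : Pairwise fun i j => IsUnit (v i - v j)) (hz : ∀ i, z - v i * x ∈ R⁰)
    (hb : ∀ i, x * b ∈ Ideal.span {z - v i * x}) : b * z ∈ Ideal.span {x} := by
  obtain ⟨p, hp, hpt⟩ := ht
  have map_mem : ∀ a ∈ R⁰, algebraMap R A a ∈ A⁰ := fun a ha =>
    (IsLocalization.map_units A (⟨a, ha⟩ : R⁰)).mem_nonZeroDivisors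
  have hzA : ∀ i, algebraMap R A (z - v i * x) =
      (t - algebraMap R A (v i)) * algebraMap R A x := fun i => by
    rw [map_sub, map_mul, ← htx, sub_mul]
  have htv : ∀ i, t - algebraMap R A (v i) ∈ A⁰ := fun i =>
    (mul_mem_nonZeroDivisors.mp (hzA i ▸ map_mem _ (hz i))).1
  have hbv : ∀ i, ∃ c, algebraMap R A b = (t - algebraMap R A (v i)) * algebraMap R A c := by
    intro i
    obtain ⟨c, hc⟩ := Ideal.mem_span_singleton.mp (hb i)
    refine ⟨c, (mul_cancel_left_mem_nonZeroDivisors (map_mem x hx)).mp ?_⟩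
    rw [← map_mul, hc, map_mul, hzA]
    ring
  obtain ⟨d, hd⟩ := algebraMap_mul_aeval_mem_range hp hpt (Finset.card_range _).symm
    (hv.set_pairwise _) (fun i _ => htv i) (fun i _ => hbv i) X
  rw [aeval_X] at hd
  refine Ideal.mem_span_singleton.mpr ⟨d, IsFractionRing.injective R A ?_⟩
  rw [map_mul, map_mul, hd, ← htx]
  ring

end PartialFractions

section Core

theorem isIntegral_of_mul_mem_of_mem_nonZeroDivisors {R A : Type*} [CommRing R] [IsNoetherianRing R]
    [CommRing A] [Algebra R A] {M : Submodule R A} (hM : M.FG) {a t : A} (ha : a ∈ M)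
    (ha0 : a ∈ A⁰) (ht : ∀ m ∈ M, t * m ∈ M) : IsIntegral R t := by
  have : IsNoetherian R M := isNoetherian_of_fg_of_noetherian M hM
  have hpow : ∀ k : ℕ, a * t ^ k ∈ M := fun k => by
    induction k with
    | zero => simpa using ha
    | succ k ih => exact (by ring : t * (a * t ^ k) = a * t ^ (k + 1)) ▸ ht _ ih
  have hmem : ∀ q ∈ Subalgebra.toSubmodule (Algebra.adjoin R {t}), LinearMap.mulLeft R a q ∈ M := by
    rw [Algebra.adjoin_eq_span, ← Submonoid.powers_eq_closure]
    refine Submodule.span_le (p := M.comap (LinearMap.mulLeft R a)).mpr ?_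
    rintro _ ⟨k, rfl⟩
    exact hpow k
  refine isIntegral_of_submodule_noetherian (Algebra.adjoin R {t})
    (isNoetherian_of_injective ((LinearMap.mulLeft R a).restrict hmem) fun q q' h => ?_) t
    (Algebra.self_mem_adjoin_singleton R t)
  exact Subtype.ext ((mul_cancel_left_mem_nonZeroDivisors ha0).mp (congrArg Subtype.val h))

variable {R : Type u} [CommRing R] [IsNoetherianRing R] {I : Ideal R} {b x z : R}

theorem IsReduction.isIntegral_of_mul_eq {A : Type*} [CommRing A] [Algebra R A]
    (hx : IsReduction (Ideal.span {x}) I) (hxA : algebraMap R A x ∈ A⁰) (hz : z ∈ I) {t : A}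
    (ht : t * algebraMap R A x = algebraMap R A z) : IsIntegral R t := by
  obtain ⟨hxI, r, hr⟩ := hx
  have hx_pow : x ^ r ∈ I ^ r := Ideal.pow_mem_pow (hxI (Ideal.mem_span_singleton_self x)) r
  refine isIntegral_of_mul_mem_of_mem_nonZeroDivisors
    (M := Submodule.map (Algebra.linearMap R A) (I ^ r)) ((IsNoetherian.noetherian _).map _)
    (Submodule.mem_map_of_mem hx_pow)
    (by simpa only [Algebra.linearMap_apply, map_pow] using pow_mem hxA r) ?_
  rintro _ ⟨a, ha, rfl⟩
  obtain ⟨c, hc, hxc⟩ := Ideal.mem_span_singleton_mul.mp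
    (hr ▸ pow_succ' I r ▸ Ideal.mul_mem_mul hz ha : z * a ∈ Ideal.span {x} * I ^ r)
  refine ⟨c, hc, (mul_cancel_left_mem_nonZeroDivisors hxA).mp ?_⟩
  rw [Algebra.linearMap_apply, Algebra.linearMap_apply, ← map_mul, hxc, map_mul, ← ht]
  ring

variable [IsLocalRing R] [Infinite (ResidueField R)]

theorem mul_mem_span_singleton_of_mul_mem_core (hx : IsReduction (Ideal.span {x}) I) (hx0 : x ∈ R⁰)
    (hb : x * b ∈ core I) (hz : z ∈ I) : b * z ∈ Ideal.span {x} := by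
  have hxI : x ∈ I := hx.1 (Ideal.mem_span_singleton_self x)
  have hI : ¬ IsNilpotent I := fun ⟨k, hk⟩ =>
    nonZeroDivisors.ne_zero (pow_mem hx0 k) (by simpa [hk] using Ideal.pow_mem_pow hxI k)
  obtain ⟨n, hn⟩ := hx.exists_spanFinrank_pow_succ_le
  obtain ⟨F, hF⟩ := exists_finset_isReduction hn hz hxI
  obtain ⟨v, hvF, hv⟩ := exists_pairwise_isUnit_sub F
  have hzx : IsReduction (Ideal.span {z, x}) I :=
    hx.mono (Ideal.span_mono (by simp))
      (Ideal.span_le.mpr (by simp [Set.insert_subset_iff, hz, hxI]))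
  have hred : ∀ i, IsReduction (Ideal.span {z - v i * x}) I := fun i => by
    simpa using hF (v i) (hvF i) ⊥ (by simpa using hzx)
  let t : Localization R⁰ := IsLocalization.mk' _ z ⟨x, hx0⟩
  have htx : t * algebraMap R (Localization R⁰) x = algebraMap R (Localization R⁰) z :=
    IsLocalization.mk'_spec _ z ⟨x, hx0⟩
  have hxA : algebraMap R (Localization R⁰) x ∈ (Localization R⁰)⁰ :=
    (IsLocalization.map_units _ (⟨x, hx0⟩ : R⁰)).mem_nonZeroDivisors
  exact mul_mem_span_singleton_of_forall_mem_span_singleton hx0 htx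
    (hx.isIntegral_of_mul_eq hxA hz htx) hv (fun i => (hred i).mem_nonZeroDivisors hxI hx0)
    fun i => ((hred i).isMinimalReduction_span_singleton hI).core_le hb

theorem IsMinimalReduction.exists_eq_span_singleton {J : Ideal R} (hJ : IsMinimalReduction J I)
    (hx : IsReduction (Ideal.span {x}) I) : ∃ y, J = Ideal.span {y} := by
  obtain ⟨n, hn⟩ := hx.exists_spanFinrank_pow_succ_le
  obtain ⟨y, hyJ, hy⟩ := hJ.1.exists_isReduction_span_singleton hn
  exact ⟨y, (hJ.2 _ hy ((Ideal.span_singleton_le_iff_mem _).mpr hyJ)).symm⟩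

theorem core_le_colon_mul {y : R} (hy : IsMinimalReduction (Ideal.span {y}) I) (hy0 : y ∈ R⁰) :
    core I ≤ Submodule.colon (Ideal.span {y}) I * Ideal.span {y} := by
  intro a ha
  obtain ⟨b, rfl⟩ := Ideal.mem_span_singleton.mp (hy.core_le ha)
  rw [mul_comm y b]
  exact Ideal.mul_mem_mul
    (Submodule.mem_colon.mpr fun z => mul_mem_span_singleton_of_mul_mem_core hy.1 hy0 ha)
    (Ideal.mem_span_singleton_self y)

end Core

theorem statement2_general {R : Type u} [CommRing R] [IsNoetherianRing R] [IsLocalRing R]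
    [Infinite (ResidueField R)] {I : Ideal R} {x : R} (hx : IsReduction (Ideal.span {x}) I)
    (hx0 : x ∈ R⁰)
    (hbal : ∀ J₁ J₂, IsMinimalReduction J₁ I → IsMinimalReduction J₂ I →
      Submodule.colon J₁ I = Submodule.colon J₂ I) :
    ∀ J, IsMinimalReduction J I → core I = Submodule.colon J I * J := by
  intro J hJ
  obtain ⟨y, rfl⟩ := hJ.exists_eq_span_singleton hx
  have hy0 : y ∈ R⁰ := hJ.1.mem_nonZeroDivisors (hx.1 (Ideal.mem_span_singleton_self x)) hx0
  refine (core_le_colon_mul hJ hy0).antisymm (le_sInf fun K hK => ?_)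
  rw [hbal _ K hJ hK, Ideal.mul_le]
  exact fun a ha c hc => Submodule.mem_colon.mp ha c (hJ.1.1 hc)

/-- Lemma 2.3: in a one-dimensional local Cohen–Macaulay ring with infinite residue
field, if `J : I` is independent of the minimal reduction `J` of the `𝔪`-primary
ideal `I`, then `core I = (J : I)J` for every minimal reduction `J`. -/
theorem statement2 {R : Type u} [CommRing R] [IsNoetherianRing R] [IsLocalRing R]
    (hCM : IsCMLocalRing R) (hdim : rDim R = 1)
    (hres : Infinite (ResidueField R))
    (I : Ideal R) (hI : I.radical = maximalIdeal R)
    (hbal : ∀ J₁ J₂, IsMinimalReduction J₁ I → IsMinimalReduction J₂ I →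
      Submodule.colon J₁ I = Submodule.colon J₂ I) :
    ∀ J, IsMinimalReduction J I → core I = Submodule.colon J I * J := by
  have := hres
  obtain ⟨x, hx0, hx⟩ := exists_isReduction_span_singleton_of_isCMLocalRing hCM hdim hI
  exact statement2_general hx hx0 hbal

end CPU
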